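/- Let α₁,…,αₙ and x₁,…,xₙ be sequences of nonnegative real numbers, and let p > 1. Then the sum over all permutations σ in the symmetric group Sₙ of (α_{σ(1)}x₁ + ⋯ + α_{σ(n)}xₙ)^p is at most (n-1)!·(α₁+⋯+αₙ)^p·(x₁^p+⋯+xₙ^p). -/

import Mathlib

open scoped BigOperators ENNReal

/-- The `ℓ^p` norm of a vector in `ℝⁿ`, for `p ∈ [1, ∞]`. -/
noncomputable def vecPNorm {n : ℕ} (p : ℝ≥0∞) (x : Fin n → ℝ) : ℝ :=
  if p = ∞ then ⨆ i, |x i| else (∑ i, |x i| ^ p.toReal) ^ (1 / p.toReal)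

/-- The operator norm of a matrix acting on `(ℝⁿ, ‖·‖_p)`,
    i.e. `sup_{x ≠ 0} ‖Ax‖_p / ‖x‖_p`. -/
noncomputable def matPNorm {n : ℕ} (p : ℝ≥0∞) (A : Matrix (Fin n) (Fin n) ℝ) : ℝ :=
  sSup {r : ℝ | ∃ x : Fin n → ℝ, x ≠ 0 ∧ r = vecPNorm p (A.mulVec x) / vecPNorm p x}

/-- The circulant matrix `A(n, a, b)` with `a` on the diagonal and `b` elsewhere. -/
def circA (n : ℕ) (a b : ℝ) : Matrix (Fin n) (Fin n) ℝ :=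
  Matrix.of fun i j => if i = j then a else b

/-!
The matrix with entries `α (σ i)`, with rows indexed by `σ` and columns by `i`, has all row sums
equal to `∑ α` and, by transitivity of `Sₙ`, all column sums equal to `(n - 1)! * ∑ α`. The Schur
test bounds its `ℓ^p` operator norm by `R ^ (1 - 1 / p) * C ^ (1 / p)`, where `R` and `C` bound the
row and column sums; it follows from Hölder's inequality in each row and an interchange of sums.
-/

theorem card_nsmul_sum_comp_smul {G ι M : Type*} [Group G] [Fintype G] [Fintype ι]
    [MulAction G ι] [MulAction.IsPretransitive G ι] [AddCommMonoid M] (f : ι → M) (i : ι) :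
    Fintype.card ι • ∑ g : G, f (g • i) = Fintype.card G • ∑ j, f j := by
  have sum_orbit_eq (j : ι) : ∑ g : G, f (g • j) = ∑ g : G, f (g • i) := by
    obtain ⟨h, rfl⟩ := MulAction.exists_smul_eq G i j
    simpa only [Equiv.coe_mulRight, mul_smul] using
      Equiv.sum_comp (Equiv.mulRight h) fun g ↦ f (g • i)
  calc
    Fintype.card ι • ∑ g : G, f (g • i) = ∑ j, ∑ g : G, f (g • j) := by
      simp only [sum_orbit_eq, Finset.sum_const, Finset.card_univ]
    _ = ∑ g : G, ∑ j, f (g • j) := Finset.sum_comm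
    _ = ∑ _g : G, ∑ j, f j :=
      Finset.sum_congr rfl fun g _ ↦ Equiv.sum_comp (MulAction.toPerm g) f
    _ = Fintype.card G • ∑ j, f j := by rw [Finset.sum_const, Finset.card_univ]

theorem rpow_inner_le_rpow_weight_mul_inner_rpow {ι : Type*} (s : Finset ι) {w f : ι → ℝ} {p : ℝ}
    (hp : 1 ≤ p) (hw : ∀ i, 0 ≤ w i) (hf : ∀ i, 0 ≤ f i) :
    (∑ i ∈ s, w i * f i) ^ p ≤ (∑ i ∈ s, w i) ^ (p - 1) * ∑ i ∈ s, w i * f i ^ p := by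
  have hp0 : p ≠ 0 := by positivity
  have hW : 0 ≤ ∑ i ∈ s, w i := Finset.sum_nonneg fun i _ ↦ hw i
  have hwf : 0 ≤ ∑ i ∈ s, w i * f i := Finset.sum_nonneg fun i _ ↦ mul_nonneg (hw i) (hf i)
  have hwfp : 0 ≤ ∑ i ∈ s, w i * f i ^ p :=
    Finset.sum_nonneg fun i _ ↦ mul_nonneg (hw i) (Real.rpow_nonneg (hf i) p)
  calc
    (∑ i ∈ s, w i * f i) ^ p
        ≤ ((∑ i ∈ s, w i) ^ (1 - p⁻¹) * (∑ i ∈ s, w i * f i ^ p) ^ p⁻¹) ^ p := by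
      gcongr
      exact Real.inner_le_weight_mul_Lp_of_nonneg s hp w f hw hf
    _ = (∑ i ∈ s, w i) ^ (p - 1) * ∑ i ∈ s, w i * f i ^ p := by
      rw [Real.mul_rpow (by positivity) (by positivity), ← Real.rpow_mul hW,
        Real.rpow_inv_rpow hwfp hp0, sub_mul, one_mul, inv_mul_cancel₀ hp0]

/-- The **Schur test** for nonnegative matrices. -/
theorem sum_rpow_sum_mul_le_of_row_sum_le_of_col_sum_le {κ ι : Type*} (t : Finset κ)
    (s : Finset ι) {A : κ → ι → ℝ} {x : ι → ℝ} {R C p : ℝ} (hp : 1 ≤ p)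
    (hA : ∀ k i, 0 ≤ A k i) (hx : ∀ i, 0 ≤ x i) (hR : 0 ≤ R)
    (hrow : ∀ k ∈ t, ∑ i ∈ s, A k i ≤ R) (hcol : ∀ i ∈ s, ∑ k ∈ t, A k i ≤ C) :
    ∑ k ∈ t, (∑ i ∈ s, A k i * x i) ^ p ≤ R ^ (p - 1) * C * ∑ i ∈ s, x i ^ p := by
  have hxp (i : ι) : 0 ≤ x i ^ p := Real.rpow_nonneg (hx i) p
  have row_le (k : κ) (hk : k ∈ t) :
      (∑ i ∈ s, A k i * x i) ^ p ≤ R ^ (p - 1) * ∑ i ∈ s, A k i * x i ^ p := by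
    refine (rpow_inner_le_rpow_weight_mul_inner_rpow s hp (hA k) hx).trans ?_
    gcongr
    · exact Finset.sum_nonneg fun i _ ↦ mul_nonneg (hA k i) (hxp i)
    · exact Finset.sum_nonneg fun i _ ↦ hA k i
    · exact hrow k hk
  calc
    ∑ k ∈ t, (∑ i ∈ s, A k i * x i) ^ p
        ≤ ∑ k ∈ t, R ^ (p - 1) * ∑ i ∈ s, A k i * x i ^ p := Finset.sum_le_sum row_le
    _ = R ^ (p - 1) * ∑ i ∈ s, (∑ k ∈ t, A k i) * x i ^ p := by
      rw [← Finset.mul_sum, Finset.sum_comm]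
      simp only [Finset.sum_mul]
    _ ≤ R ^ (p - 1) * ∑ i ∈ s, C * x i ^ p := by
      gcongr with i hi
      · exact hxp i
      · exact hcol i hi
    _ = R ^ (p - 1) * C * ∑ i ∈ s, x i ^ p := by rw [← Finset.mul_sum, mul_assoc]

theorem stmt_0_general {G ι : Type*} [Group G] [Fintype G] [Fintype ι] [MulAction G ι]
    [MulAction.IsPretransitive G ι] {α x : ι → ℝ} {p : ℝ} (hα : ∀ i, 0 ≤ α i) (hx : ∀ i, 0 ≤ x i)
    (hp : 1 ≤ p) :
    ∑ g : G, (∑ i, α (g • i) * x i) ^ p ≤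
      (Fintype.card G / Fintype.card ι : ℝ) * (∑ i, α i) ^ p * ∑ i, x i ^ p := by
  have hS : 0 ≤ ∑ i, α i := Finset.sum_nonneg fun i _ ↦ hα i
  have row_sum (g : G) : ∑ i, α (g • i) = ∑ i, α i := Equiv.sum_comp (MulAction.toPerm g) α
  have col_sum (i : ι) :
      ∑ g : G, α (g • i) = (Fintype.card G / Fintype.card ι : ℝ) * ∑ j, α j := by
    have hι : (Fintype.card ι : ℝ) ≠ 0 := Nat.cast_ne_zero.2 (Fintype.card_pos_iff.2 ⟨i⟩).ne'
    rw [div_mul_eq_mul_div, eq_div_iff hι, mul_comm]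
    simpa only [nsmul_eq_mul] using card_nsmul_sum_comp_smul (G := G) α i
  have hpow : (∑ i, α i) ^ p = (∑ i, α i) ^ (p - 1) * ∑ i, α i := by
    rw [← Real.rpow_add_one' hS (by linarith), sub_add_cancel]
  refine (sum_rpow_sum_mul_le_of_row_sum_le_of_col_sum_le Finset.univ Finset.univ hp
    (fun g i ↦ hα (g • i)) hx hS (fun g _ ↦ (row_sum g).le) fun i _ ↦ (col_sum i).le).trans_eq ?_
  rw [hpow]
  ring

theorem stmt_0 (n : ℕ) (α x : Fin n → ℝ) (hα : ∀ i, 0 ≤ α i) (hx : ∀ i, 0 ≤ x i)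
    (p : ℝ) (hp : 1 < p) :
    ∑ σ : Equiv.Perm (Fin n), (∑ i, α (σ i) * x i) ^ p ≤
      (Nat.factorial (n - 1) : ℝ) * (∑ i, α i) ^ p * ∑ i, x i ^ p := by
  cases n with
  | zero => simp [(zero_lt_one.trans hp).ne']
  | succ m =>
    have hm : (m : ℝ) + 1 ≠ 0 := m.cast_add_one_ne_zero
    simpa [Fintype.card_perm, Nat.factorial_succ, hm] using
      stmt_0_general (G := Equiv.Perm (Fin (m + 1))) hα hx hp.le
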